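/- arXiv:1909.04259 — 5 statements merged into one kernel-verified Lean document; each statement's English description precedes it below -/
import Mathlib

section
/- The entries of P†Q satisfy [P†Q]_{i,j} = 𝓡_p(−2Ĝ−i+j) for 1 ≤ j ≤ 2Ĝ and [P†Q]_{i,j} = 𝓡_p(2U+1−2Ĝ−i+j) for 2Ĝ < j ≤ 4Ĝ, and in every case the argument of 𝓡_p is a nonzero integer; consequently Σ_{i,j} |[P†Q]_{i,j}|² ≤ 4Ĝ·(2U+1)·max_{a ≠ 0} |𝓡_p(a)|², where the maximum is over nonzero integers a (equivalently over 1 ≤ |a| ≤ 2Ĝ+2U, since 𝓡_p(a) = 0 for |a| > 2Ĝ). -/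
open Complex Finset Matrix

/-! Every column of `P` and of `Q` is a translate of `p` seen through the same window of
`2Ĝ+2U+1` rows, and the window contains the whole support of each translate in `P`. The inner
product of a column of `P` with a column of `Q` is therefore a full sum over `ℤ`, which
translation invariance turns into `𝓡_p` at the difference of the two shifts. That difference
never vanishes: the shifts of `P` fill `[-Ĝ-2U, -Ĝ]`, while those of `Q` fill the blocks of
length `2Ĝ` on either side of it. -/

theorem finsum_eq_sum_comp_of_support_subset_range {ι α M : Type*} [AddCommMonoid M] [Fintype ι]
    {e : ι → α} (he : Function.Injective e) {f : α → M}
    (hf : Function.support f ⊆ Set.range e) :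
    ∑ᶠ a, f a = ∑ i, f (e i) :=
  calc ∑ᶠ a, f a = ∑ᶠ a ∈ Set.range e, f a := by
        rw [← finsum_mem_univ]
        exact finsum_mem_inter_support_eq' f _ _ fun _ ha => iff_of_true trivial (hf ha)
    _ = ∑ i, f (e i) := by rw [finsum_mem_range he, finsum_eq_sum_of_fintype]

theorem sum_sum_le_card_mul_card_mul {m n R : Type*} [Fintype m] [Fintype n] [Semiring R]
    [PartialOrder R] [IsOrderedAddMonoid R] {f : m → n → R} {C : R} (hf : ∀ i j, f i j ≤ C) :
    ∑ i, ∑ j, f i j ≤ Fintype.card m * Fintype.card n * C :=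
  calc ∑ i, ∑ j, f i j ≤ ∑ _i : m, ∑ _j : n, C :=
        Finset.sum_le_sum fun i _ => Finset.sum_le_sum fun j _ => hf i j
    _ = Fintype.card m * Fintype.card n * C := by
        simp only [Finset.sum_const, Finset.card_univ, nsmul_eq_mul, mul_assoc]

/-- The aperiodic auto-correlation `𝓡_p` of a finitely supported sequence `p`. Using `finsum`
avoids choosing a window that contains the support; the value is `0` by convention when
infinitely many terms are nonzero. -/
noncomputable def autocorrelation {A R : Type*} [Add A] [NonUnitalNonAssocSemiring R] [Star R]
    (p : A → R) (a : A) : R :=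
  ∑ᶠ g, p g * star (p (g + a))

theorem autocorrelation_eq_sum_of_support_subset {A R : Type*} [Add A]
    [NonUnitalNonAssocSemiring R] [Star R] {p : A → R} {s : Finset A}
    (hs : Function.support p ⊆ s) (a : A) :
    autocorrelation p a = ∑ g ∈ s, p g * star (p (g + a)) :=
  finsum_eq_sum_of_support_subset _ ((Function.support_mul_subset_left _ _).trans hs)

section Translates

variable {A R : Type*} [AddGroup A] [NonUnitalCommSemiring R] [StarRing R]

theorem finsum_star_translate_mul_translate (p : A → R) (b c : A) :
    ∑ᶠ k, star (p (k + b)) * p (k + c) = autocorrelation p (-c + b) := by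
  rw [autocorrelation,
    ← finsum_comp_equiv (Equiv.addRight c) (f := fun g => p g * star (p (g + (-c + b))))]
  simp only [Equiv.coe_addRight, add_assoc, add_neg_cancel_left, mul_comm]

theorem conjTranspose_mul_apply_eq_autocorrelation {κ m n : Type*} [Fintype κ] {w : κ → A}
    (hw : Function.Injective w) {p : A → R} {P : Matrix κ m R} {Q : Matrix κ n R} {i : m} {j : n}
    {b c : A} (hP : ∀ k, P k i = p (w k + b)) (hQ : ∀ k, Q k j = p (w k + c))
    (hb : Function.support (fun k => p (k + b)) ⊆ Set.range w) :
    (Pᴴ * Q) i j = autocorrelation p (-c + b) := by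
  have hsupp : Function.support (fun k => star (p (k + b)) * p (k + c)) ⊆ Set.range w := by
    refine fun k hk => hb fun hpk => hk ?_
    simp only [hpk, star_zero, zero_mul]
  rw [← finsum_star_translate_mul_translate, finsum_eq_sum_comp_of_support_subset_range hw hsupp]
  simp only [Matrix.mul_apply, Matrix.conjTranspose_apply, hP, hQ]

end Translates

theorem support_translate_subset_range_fin_cast {R : Type*} [Zero R] {p : ℤ → R} {l u b : ℤ} {N : ℕ}
    (hp : Function.support p ⊆ Set.Icc l u) (hl : b ≤ l) (hu : u < N + b) :
    Function.support (fun k => p (k + b)) ⊆ Set.range fun k : Fin N => (k : ℤ) := by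
  intro k hk
  obtain ⟨hlk, hku⟩ := hp hk
  exact ⟨⟨k.toNat, by omega⟩, Int.toNat_of_nonneg (by omega)⟩

/-- The entries of `P†Q` are values of the aperiodic auto-correlation `𝓡_p` at nonzero
lags; hence the squared Frobenius norm of `P†Q` is at most
`4Ĝ·(2U+1)·max_{a≠0}|𝓡_p(a)|²`. -/
theorem stmt_8 (G U : ℕ) (hG : 1 ≤ G) (p : ℤ → ℂ)
    (hp : ∀ g : ℤ, (G : ℤ) < |g| → p g = 0)
    (𝓡 : ℤ → ℂ)
    (h𝓡 : ∀ a : ℤ, 𝓡 a = ∑ g ∈ Finset.Icc (-(G : ℤ)) (G : ℤ), p g * (starRingEnd ℂ) (p (g + a)))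
    (P : Matrix (Fin (2 * G + 2 * U + 1)) (Fin (2 * U + 1)) ℂ)
    (hP : ∀ i j, P i j = p (-(G : ℤ) + (i : ℤ) - (j : ℤ)))
    (Q : Matrix (Fin (2 * G + 2 * U + 1)) (Fin (4 * G)) ℂ)
    (hQ : ∀ i j, Q i j = if (j : ℕ) < 2 * G then p ((G : ℤ) + (i : ℤ) - (j : ℤ))
      else p ((G : ℤ) - 2 * (U : ℤ) - 1 + (i : ℤ) - (j : ℤ)))
    (C : ℝ)
    (hC : IsGreatest { z : ℝ | ∃ a : ℤ, a ≠ 0 ∧ z = ‖𝓡 a‖ ^ 2 } C) :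
    (∀ (i : Fin (2 * U + 1)) (j : Fin (4 * G)), (j : ℕ) < 2 * G →
      (Pᴴ * Q) i j = 𝓡 (-2 * (G : ℤ) - (i : ℤ) + (j : ℤ))) ∧
    (∀ (i : Fin (2 * U + 1)) (j : Fin (4 * G)), 2 * G ≤ (j : ℕ) →
      (Pᴴ * Q) i j = 𝓡 (2 * (U : ℤ) + 1 - 2 * (G : ℤ) - (i : ℤ) + (j : ℤ))) ∧
    (∀ (i : Fin (2 * U + 1)) (j : Fin (4 * G)),
      ((j : ℕ) < 2 * G → (-2 * (G : ℤ) - (i : ℤ) + (j : ℤ)) ≠ 0) ∧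
      (2 * G ≤ (j : ℕ) → (2 * (U : ℤ) + 1 - 2 * (G : ℤ) - (i : ℤ) + (j : ℤ)) ≠ 0)) ∧
    (∑ i : Fin (2 * U + 1), ∑ j : Fin (4 * G), ‖(Pᴴ * Q) i j‖ ^ 2) ≤
      4 * (G : ℝ) * (2 * (U : ℝ) + 1) * C := by
  have hsupp : Function.support p ⊆ Set.Icc (-(G : ℤ)) G := fun g hg =>
    abs_le.mp (not_lt.mp fun h => hg (hp g h))
  obtain rfl : 𝓡 = autocorrelation p := funext fun a => (h𝓡 a).trans
    (autocorrelation_eq_sum_of_support_subset (by rwa [Finset.coe_Icc]) a).symm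
  have entry (i : Fin (2 * U + 1)) {j a} (c : ℤ) (hQj : ∀ k, Q k j = p (k + c))
      (ha : -c + (-G - i) = a) : (Pᴴ * Q) i j = autocorrelation p a :=
    ha ▸ conjTranspose_mul_apply_eq_autocorrelation (w := fun k : Fin _ => (k : ℤ))
      (Nat.cast_injective.comp Fin.val_injective) (fun k => by rw [hP]; ring_nf) hQj
      (support_translate_subset_range_fin_cast hsupp (by omega) (by omega))
  have entry_left (i : Fin (2 * U + 1)) (j : Fin (4 * G)) (hj : (j : ℕ) < 2 * G) :
      (Pᴴ * Q) i j = autocorrelation p (-2 * G - i + j) :=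
    entry i (G - j) (fun k => by rw [hQ, if_pos hj]; ring_nf) (by ring)
  have entry_right (i : Fin (2 * U + 1)) (j : Fin (4 * G)) (hj : 2 * G ≤ (j : ℕ)) :
      (Pᴴ * Q) i j = autocorrelation p (2 * U + 1 - 2 * G - i + j) :=
    entry i (G - 2 * U - 1 - j) (fun k => by rw [hQ, if_neg hj.not_gt]; ring_nf) (by ring)
  have entry_le i j : ‖(Pᴴ * Q) i j‖ ^ 2 ≤ C := by
    rcases lt_or_ge (j : ℕ) (2 * G) with hj | hj
    · exact hC.2 ⟨-2 * G - i + j, by omega, by rw [entry_left i j hj]⟩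
    · exact hC.2 ⟨2 * U + 1 - 2 * G - i + j, by omega, by rw [entry_right i j hj]⟩
  refine ⟨entry_left, entry_right, fun i j => by omega, ?_⟩
  refine (sum_sum_le_card_mul_card_mul entry_le).trans_eq ?_
  simp only [Fintype.card_fin, Nat.cast_add, Nat.cast_mul, Nat.cast_ofNat, Nat.cast_one]
  ring
end

section
/- Let K ≥ 2 be an integer, 0 < r < 1, and let k1, k2 be integers with k1 ≢ k2 (mod K). Then Δ(k1,k2) = (1 − r^K) / (K²·(1 − ρ_{k2}/ρ_{k1})) · [ 1/(1 − ρ_{k2}) − 1/(1 − conj(ρ_{k2})) + 1/(1 − conj(ρ_{k1})) − 1/(1 − ρ_{k1}) ]. -/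
open Complex Finset

/-!
Split the square `m, n < K` along its diagonal. On each triangle `n ↦ (n + d, n)` and
`m ↦ (m, m + d)` the summand `r ^ |m - n| * x ^ m * y ^ n` factors as `(x * y) ^ n * z ^ d`, with
`z = r * x` and `z = r * y` respectively, so both halves are the same iterated geometric sum. The
diagonal, which they share, contributes `∑ (x * y) ^ n = 0` because `x * y ≠ 1` is a `K`-th root of
unity.
-/

section DoubleSums

theorem sum_range_sum_range_add_sum_diag {M : Type*} [AddCommMonoid M] (f : ℕ → ℕ → M) (K : ℕ) :
    ∑ m ∈ range K, ∑ n ∈ range K, f m n + ∑ n ∈ range K, f n n =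
      ∑ n ∈ range K, ∑ d ∈ range (K - n), f (n + d) n +
        ∑ m ∈ range K, ∑ d ∈ range (K - m), f m (m + d) := by
  have lower_triangle : ∑ n ∈ range K, ∑ d ∈ range (K - n), f (n + d) n =
      ∑ m ∈ range K, ∑ n ∈ range (m + 1), f m n := by
    rw [← sum_range_diag_flip K fun n d ↦ f (n + d) n]
    refine sum_congr rfl fun m _ ↦ sum_congr rfl fun n hn ↦ ?_
    rw [Nat.add_sub_cancel' (mem_range_succ_iff.mp hn)]
  rw [lower_triangle, ← sum_add_distrib, ← sum_add_distrib]
  refine sum_congr rfl fun m hm ↦ ?_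
  rw [← sum_Ico_eq_sum_range (f m), sum_range_succ, add_right_comm,
    sum_range_add_sum_Ico _ (mem_range.mp hm).le]

theorem geom_sum_eq_zero_of_pow_eq_one {R : Type*} [Ring R] [NoZeroDivisors R] {w : R} {K : ℕ}
    (hwK : w ^ K = 1) (hw : w ≠ 1) : ∑ n ∈ range K, w ^ n = 0 :=
  eq_zero_of_ne_zero_of_mul_right_eq_zero (sub_ne_zero.mpr hw)
    (by rw [geom_sum_mul, hwK, sub_self])

variable {F : Type*} [Field F] {K : ℕ}

theorem sum_pow_mul_geom_sum_of_pow_eq_one {w z : F} (hwK : w ^ K = 1) (hw : w ≠ 1)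
    (hz : z ≠ 1) (hzw : z ≠ w) :
    ∑ n ∈ range K, w ^ n * ∑ d ∈ range (K - n), z ^ d =
      (1 - z ^ K) / (1 - w) * (1 / (1 - z) - 1 / (1 - z / w)) := by
  rcases eq_or_ne K 0 with rfl | hK
  · simp
  have hw0 : w ≠ 0 := (IsUnit.of_pow_eq_one hwK hK).ne_zero
  have hw1 : 1 - w ≠ 0 := sub_ne_zero.mpr hw.symm
  have hz1 : 1 - z ≠ 0 := sub_ne_zero.mpr hz.symm
  have hwz : w - z ≠ 0 := sub_ne_zero.mpr hzw.symm
  have mixed_sum : ∑ n ∈ range K, w ^ n * z ^ (K - n) = z * ((1 - z ^ K) / (w - z)) := by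
    rw [← hwK, ← (Commute.all w z).geom_sum₂ hzw.symm, mul_sum]
    refine sum_congr rfl fun n hn ↦ ?_
    rw [mul_left_comm, ← pow_succ', Nat.sub_right_comm, Nat.sub_add_cancel (by grind)]
  calc ∑ n ∈ range K, w ^ n * ∑ d ∈ range (K - n), z ^ d
    _ = (∑ n ∈ range K, w ^ n * z ^ (K - n) - ∑ n ∈ range K, w ^ n) / (z - 1) := by
        simp only [geom_sum_eq hz, mul_div_assoc', mul_sub, mul_one, ← sum_div, sum_sub_distrib]
    _ = z * ((1 - z ^ K) / (w - z)) / (z - 1) := by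
        rw [mixed_sum, geom_sum_eq_zero_of_pow_eq_one hwK hw, sub_zero]
    _ = (1 - z ^ K) / (1 - w) * (1 / (1 - z) - 1 / (1 - z / w)) := by
        rw [one_sub_div hw0, ← neg_sub 1 z]
        field_simp
        ring

theorem sum_pow_natAbs_sub_mul_pow_mul_pow {r x y : F} (hxK : x ^ K = 1) (hyK : y ^ K = 1)
    (hxy : x * y ≠ 1) (hrK : r ^ K ≠ 1) :
    ∑ m ∈ range K, ∑ n ∈ range K, r ^ ((m : ℤ) - n).natAbs * (x ^ m * y ^ n) =
      (1 - r ^ K) / (1 - x * y) *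
        (1 / (1 - r * y) - 1 / (1 - r / y) + 1 / (1 - r * x) - 1 / (1 - r / x)) := by
  have hK : K ≠ 0 := by rintro rfl; exact hrK (pow_zero r)
  have hx0 : x ≠ 0 := (IsUnit.of_pow_eq_one hxK hK).ne_zero
  have hy0 : y ≠ 0 := (IsUnit.of_pow_eq_one hyK hK).ne_zero
  have hxyK : (x * y) ^ K = 1 := by rw [mul_pow, hxK, hyK, one_mul]
  have hrxK : (r * x) ^ K = r ^ K := by rw [mul_pow, hxK, mul_one]
  have hryK : (r * y) ^ K = r ^ K := by rw [mul_pow, hyK, mul_one]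
  have ne_of_pow_ne {u v : F} (hu : u ^ K = r ^ K) (hv : v ^ K = 1) : u ≠ v :=
    fun h ↦ hrK (by rw [← hu, h, hv])
  have diagonal (n : ℕ) : r ^ ((n : ℤ) - n).natAbs * (x ^ n * y ^ n) = (x * y) ^ n := by
    simp [mul_pow]
  have lower (n d : ℕ) : r ^ (((n + d : ℕ) : ℤ) - n).natAbs * (x ^ (n + d) * y ^ n) =
      (x * y) ^ n * (r * x) ^ d := by
    rw [show (((n + d : ℕ) : ℤ) - n).natAbs = d by lia]
    ring
  have upper (m d : ℕ) : r ^ ((m : ℤ) - (m + d : ℕ)).natAbs * (x ^ m * y ^ (m + d)) =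
      (x * y) ^ m * (r * y) ^ d := by
    rw [show ((m : ℤ) - (m + d : ℕ)).natAbs = d by lia]
    ring
  have triangles := sum_range_sum_range_add_sum_diag
    (fun m n ↦ r ^ ((m : ℤ) - n).natAbs * (x ^ m * y ^ n)) K
  simp only [diagonal, lower, upper, ← mul_sum] at triangles
  rw [geom_sum_eq_zero_of_pow_eq_one hxyK hxy, add_zero] at triangles
  rw [triangles,
    sum_pow_mul_geom_sum_of_pow_eq_one hxyK hxy (ne_of_pow_ne hrxK (one_pow K))
      (ne_of_pow_ne hrxK hxyK),
    sum_pow_mul_geom_sum_of_pow_eq_one hxyK hxy (ne_of_pow_ne hryK (one_pow K))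
      (ne_of_pow_ne hryK hxyK),
    hrxK, hryK, mul_div_mul_right r x hy0, mul_comm r x, mul_div_mul_left r y hx0]
  ring

end DoubleSums

theorem addChar_zmod_pow_eq_one {M : Type*} [Monoid M] {K : ℕ} (ψ : AddChar (ZMod K) M)
    (j : ZMod K) : ψ j ^ K = 1 := by
  rw [← AddChar.map_nsmul_eq_pow, ZModModule.char_nsmul_eq_zero, AddChar.map_zero_eq_one]

theorem exp_neg_two_pi_mul_I_mul_sub_div {K : ℕ} [NeZero K] (k1 k2 : ℤ) (m n : ℕ) :
    exp (-2 * (Real.pi : ℂ) * I * ((k1 * m - k2 * n : ℤ) : ℂ) / K) =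
      ZMod.stdAddChar (-k1 : ZMod K) ^ m * ZMod.stdAddChar (k2 : ZMod K) ^ n := by
  rw [← AddChar.map_nsmul_eq_pow, ← AddChar.map_nsmul_eq_pow, ← AddChar.map_add_eq_mul,
    show m • (-k1 : ZMod K) + n • (k2 : ZMod K) = ((-(k1 * m - k2 * n) : ℤ) : ZMod K) by
      push_cast [nsmul_eq_mul]; ring, ZMod.stdAddChar_coe]
  push_cast
  ring_nf

theorem stmt_10_general (K : ℕ) (r : ℝ) (hr : r ≠ 0) (hrK : r ^ K ≠ 1)
    (ρ : ℤ → ℂ)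
    (hρ : ∀ k : ℤ, ρ k = (r : ℂ) * exp (2 * (Real.pi : ℂ) * I * (k : ℂ) / (K : ℂ)))
    (Δ : ℤ → ℤ → ℂ)
    (hΔ : ∀ k1 k2 : ℤ, Δ k1 k2 =
      (1 / (K : ℂ) ^ 2) * ∑ m ∈ range K, ∑ n ∈ range K,
        (r : ℂ) ^ (((m : ℤ) - (n : ℤ)).natAbs) *
          exp (-2 * (Real.pi : ℂ) * I * (((k1 * m - k2 * n : ℤ)) : ℂ) / (K : ℂ)))
    (k1 k2 : ℤ) (hne : (k1 : ZMod K) ≠ (k2 : ZMod K)) :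
    Δ k1 k2 = (1 - (r : ℂ) ^ K) / ((K : ℂ) ^ 2 * (1 - ρ k2 / ρ k1)) *
      (1 / (1 - ρ k2) - 1 / (1 - (starRingEnd ℂ) (ρ k2))
        + 1 / (1 - (starRingEnd ℂ) (ρ k1)) - 1 / (1 - ρ k1)) := by
  have : NeZero K := ⟨by rintro rfl; exact hrK (pow_zero r)⟩
  set χ : AddChar (ZMod K) ℂ := ZMod.stdAddChar
  have hρχ (k : ℤ) : ρ k = r * χ k := by rw [hρ, ZMod.stdAddChar_coe]
  have hconj (k : ℤ) : (starRingEnd ℂ) (ρ k) = r * χ (-k) := by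
    rw [hρχ, map_mul, conj_ofReal, AddChar.map_neg_eq_conj]
  have hratio : ρ k2 / ρ k1 = χ (-k1) * χ k2 := by
    rw [hρχ, hρχ, mul_div_mul_left _ _ (ofReal_ne_zero.mpr hr), AddChar.map_neg_eq_inv,
      inv_mul_eq_div]
  have hχ : χ (-k1) * χ k2 ≠ 1 := by
    rw [← AddChar.map_add_eq_mul, ← AddChar.map_zero_eq_one χ, ZMod.injective_stdAddChar.ne_iff]
    exact fun h ↦ hne (neg_add_eq_zero.mp h)
  simp_rw [hΔ, exp_neg_two_pi_mul_I_mul_sub_div]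
  rw [sum_pow_natAbs_sub_mul_pow_mul_pow (addChar_zmod_pow_eq_one χ _)
    (addChar_zmod_pow_eq_one χ _) hχ (mod_cast hrK), ← mul_assoc, div_mul_div_comm, one_mul,
    hratio, hconj, hconj, hρχ, hρχ]
  simp only [AddChar.map_neg_eq_inv, inv_inv, div_eq_mul_inv (r : ℂ)]

/-- Closed form of the off-diagonal correlation `Δ(k1,k2)` of the nDFT coefficients of
the Wiener phase-noise process, for `k1 ≢ k2 (mod K)`. -/
theorem stmt_10 (K : ℕ) (hK : 2 ≤ K) (r : ℝ) (hr0 : 0 < r) (hr1 : r < 1)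
    (ρ : ℤ → ℂ)
    (hρ : ∀ k : ℤ, ρ k = (r : ℂ) * Complex.exp (2 * (Real.pi : ℂ) * Complex.I * (k : ℂ) / (K : ℂ)))
    (Δ : ℤ → ℤ → ℂ)
    (hΔ : ∀ k1 k2 : ℤ, Δ k1 k2 =
      (1 / (K : ℂ) ^ 2) * ∑ m ∈ Finset.range K, ∑ n ∈ Finset.range K,
        (r : ℂ) ^ (((m : ℤ) - (n : ℤ)).natAbs) *
          Complex.exp (-2 * (Real.pi : ℂ) * Complex.I *
            (((k1 * m - k2 * n : ℤ)) : ℂ) / (K : ℂ)))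
    (k1 k2 : ℤ) (hne : (k1 : ZMod K) ≠ (k2 : ZMod K)) :
    Δ k1 k2 = (1 - (r : ℂ) ^ K) / ((K : ℂ) ^ 2 * (1 - ρ k2 / ρ k1)) *
      (1 / (1 - ρ k2) - 1 / (1 - (starRingEnd ℂ) (ρ k2))
        + 1 / (1 - (starRingEnd ℂ) (ρ k1)) - 1 / (1 - ρ k1)) :=
  stmt_10_general K r hr0.ne' (pow_lt_one₀ hr0.le hr1 (by lia)).ne ρ hρ Δ hΔ k1 k2 hne
end

section
/- Let K ≥ 1 be an integer and 0 < r < 1. Define F : ℝ → ℝ by F(x) = (1 − r²) / (K·(1 + r² − 2rx)) + 2r·(1 − r^K)·(2r − (1 + r²)·x) / (K²·(1 + r² − 2rx)²). Then F is monotone increasing on the half-line {x ∈ ℝ : x ≤ 2r/(1+r²)}; that is, for all real x ≤ y ≤ 2r/(1+r²) one has F(x) ≤ F(y). -/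
open Finset

/-!
Let `P = (1 - r²) / (1 + r² - 2rx)` be the Poisson kernel and put `m = (1 + r²) / (1 - r²)`,
`c = (1 - r ^ K) / K`. Since `(1 + r²)(1 + r² - 2rx) - (1 - r²)² = 2r(2r - (1 + r²)x)`, the
function `K * F` is the quadratic polynomial `P + c * P * (m - P)` in `P`. As `x` increases to
`2r / (1 + r²)`, the kernel `P` increases to `m`, and the quadratic is increasing on `[0, m]` as
soon as `|c| * m ≤ 1`. This last bound follows from Bernoulli's inequality `c ≤ 1 - r`.
-/

theorem monotoneOn_add_mul_mul_sub {R : Type*} [CommRing R] [LinearOrder R]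
    [IsStrictOrderedRing R] {c m : R} (h : |c| * m ≤ 1) :
    MonotoneOn (fun t ↦ t + c * (t * (m - t))) (Set.Icc 0 m) := by
  rintro s ⟨hs0, hsm⟩ t ⟨ht0, htm⟩ hst
  have slope_bound : |c * (s + t - m)| ≤ 1 := by
    have : |s + t - m| ≤ m := abs_le.2 ⟨by linarith, by linarith⟩
    rw [abs_mul]
    exact (mul_le_mul_of_nonneg_left this (abs_nonneg c)).trans h
  have increment_nonneg : 0 ≤ (t - s) * (1 - c * (s + t - m)) :=
    mul_nonneg (sub_nonneg.2 hst) (sub_nonneg.2 (abs_le.1 slope_bound).2)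
  linear_combination increment_nonneg

/-- The Poisson kernel `(1 - r²) / (1 - 2r cos θ + r²)` of the unit disc, as a function of
`x = cos θ`, here allowed to be any real number. -/
noncomputable def cosPoissonKernel (r x : ℝ) : ℝ :=
  (1 - r ^ 2) / (1 + r ^ 2 - 2 * r * x)

section CosPoissonKernel

variable {r : ℝ}

theorem one_add_sq_sub_two_mul_pos {x : ℝ} (hr0 : 0 ≤ r) (hr1 : r < 1)
    (hx : x ≤ 2 * r / (1 + r ^ 2)) : 0 < 1 + r ^ 2 - 2 * r * x := by
  have hx' : x * (1 + r ^ 2) ≤ 2 * r := (le_div_iff₀ (by positivity)).1 hx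
  have sq_pos : 0 < (1 - r ^ 2) ^ 2 :=
    pow_pos (sub_pos.2 (pow_lt_one₀ hr0 hr1 two_ne_zero)) 2
  refine pos_of_mul_pos_right (sq_pos.trans_le ?_) (by positivity : 0 ≤ 1 + r ^ 2)
  linear_combination 2 * r * hx'

theorem cosPoissonKernel_two_mul_div_one_add_sq (h : r ^ 2 ≠ 1) :
    cosPoissonKernel r (2 * r / (1 + r ^ 2)) = (1 + r ^ 2) / (1 - r ^ 2) := by
  have hb : 1 - r ^ 2 ≠ 0 := sub_ne_zero.2 h.symm
  have ha : 1 + r ^ 2 ≠ 0 := by positivity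
  have denominator_eq :
      1 + r ^ 2 - 2 * r * (2 * r / (1 + r ^ 2)) = (1 - r ^ 2) ^ 2 / (1 + r ^ 2) := by
    field_simp
    ring
  rw [cosPoissonKernel, denominator_eq]
  field_simp

theorem monotoneOn_cosPoissonKernel (hr0 : 0 ≤ r) (hr1 : r ≤ 1) :
    MonotoneOn (cosPoissonKernel r) {x | 0 < 1 + r ^ 2 - 2 * r * x} := by
  intro x _ y (hy : 0 < 1 + r ^ 2 - 2 * r * y) hxy
  have : 0 ≤ 1 - r ^ 2 := sub_nonneg.2 (pow_le_one₀ hr0 hr1)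
  unfold cosPoissonKernel
  gcongr

theorem mapsTo_cosPoissonKernel (hr0 : 0 ≤ r) (hr1 : r < 1) :
    Set.MapsTo (cosPoissonKernel r) (Set.Iic (2 * r / (1 + r ^ 2)))
      (Set.Icc 0 ((1 + r ^ 2) / (1 - r ^ 2))) := by
  intro x hx
  constructor
  · exact div_nonneg (sub_nonneg.2 (pow_le_one₀ hr0 hr1.le))
      (one_add_sq_sub_two_mul_pos hr0 hr1 hx).le
  · rw [← cosPoissonKernel_two_mul_div_one_add_sq (pow_lt_one₀ hr0 hr1 two_ne_zero).ne]
    exact monotoneOn_cosPoissonKernel hr0 hr1.le (one_add_sq_sub_two_mul_pos hr0 hr1 hx)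
      (one_add_sq_sub_two_mul_pos hr0 hr1 le_rfl) hx

theorem cosPoissonKernel_add_mul_mul_sub {x : ℝ} (c : ℝ) (hr : r ^ 2 ≠ 1)
    (hx : 1 + r ^ 2 - 2 * r * x ≠ 0) :
    cosPoissonKernel r x +
        c * (cosPoissonKernel r x * ((1 + r ^ 2) / (1 - r ^ 2) - cosPoissonKernel r x)) =
      (1 - r ^ 2) / (1 + r ^ 2 - 2 * r * x) +
        2 * r * c * (2 * r - (1 + r ^ 2) * x) / (1 + r ^ 2 - 2 * r * x) ^ 2 := by
  have hb : 1 - r ^ 2 ≠ 0 := sub_ne_zero.2 hr.symm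
  have numerator_eq : 2 * r * c * (2 * r - (1 + r ^ 2) * x) =
      c * ((1 + r ^ 2) * (1 + r ^ 2 - 2 * r * x) - (1 - r ^ 2) ^ 2) := by ring
  rw [numerator_eq, cosPoissonKernel]
  generalize 1 + r ^ 2 - 2 * r * x = d at hx
  field_simp

theorem monotoneOn_div_add_mul_div_sq {c : ℝ} (hr0 : 0 ≤ r) (hr1 : r < 1)
    (hc : |c| ≤ (1 - r ^ 2) / (1 + r ^ 2)) :
    MonotoneOn
      (fun x ↦ (1 - r ^ 2) / (1 + r ^ 2 - 2 * r * x) +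
        2 * r * c * (2 * r - (1 + r ^ 2) * x) / (1 + r ^ 2 - 2 * r * x) ^ 2)
      (Set.Iic (2 * r / (1 + r ^ 2))) := by
  have hr : r ^ 2 < 1 := pow_lt_one₀ hr0 hr1 two_ne_zero
  have hcm : |c| * ((1 + r ^ 2) / (1 - r ^ 2)) ≤ 1 := by
    rwa [← mul_div_assoc, div_le_one (sub_pos.2 hr), ← le_div_iff₀ (by positivity)]
  have hP : MonotoneOn (cosPoissonKernel r) (Set.Iic (2 * r / (1 + r ^ 2))) :=
    (monotoneOn_cosPoissonKernel hr0 hr1.le).mono fun _ ↦ one_add_sq_sub_two_mul_pos hr0 hr1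
  refine ((monotoneOn_add_mul_mul_sub hcm).comp hP
    (mapsTo_cosPoissonKernel hr0 hr1)).congr fun x hx ↦ ?_
  exact cosPoissonKernel_add_mul_mul_sub c hr.ne (one_add_sq_sub_two_mul_pos hr0 hr1 hx).ne'

end CosPoissonKernel

section Bernoulli

variable {r p : ℝ}

theorem one_sub_rpow_div_le_one_sub (hr0 : 0 ≤ r) (hp : 1 ≤ p) : (1 - r ^ p) / p ≤ 1 - r := by
  have bernoulli : 1 + p * (r - 1) ≤ (1 + (r - 1)) ^ p :=
    one_add_mul_self_le_rpow_one_add (by linarith) hp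
  rw [add_sub_cancel] at bernoulli
  rw [div_le_iff₀ (by positivity)]
  linear_combination bernoulli

theorem abs_one_sub_rpow_div_le (hr0 : 0 ≤ r) (hr1 : r ≤ 1) (hp : 1 ≤ p) :
    |(1 - r ^ p) / p| ≤ (1 - r ^ 2) / (1 + r ^ 2) := by
  have hp0 : 0 ≤ p := zero_le_one.trans hp
  rw [abs_of_nonneg (div_nonneg (sub_nonneg.2 (Real.rpow_le_one hr0 hr1 hp0)) hp0)]
  refine (one_sub_rpow_div_le_one_sub hr0 hp).trans ((le_div_iff₀ (by positivity)).2 ?_)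
  calc (1 - r) * (1 + r ^ 2) ≤ (1 - r) * (1 + r) := by
        have := sub_nonneg.2 hr1
        gcongr
        exact pow_le_of_le_one hr0 hr1 two_ne_zero
    _ = 1 - r ^ 2 := by ring

end Bernoulli

theorem stmt_12_general {K r : ℝ} (hK : 1 ≤ K) (hr0 : 0 ≤ r) (hr1 : r < 1) :
    MonotoneOn
      (fun x ↦ (1 - r ^ 2) / (K * (1 + r ^ 2 - 2 * r * x)) +
        2 * r * (1 - r ^ K) * (2 * r - (1 + r ^ 2) * x) /
          (K ^ 2 * (1 + r ^ 2 - 2 * r * x) ^ 2))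
      (Set.Iic (2 * r / (1 + r ^ 2))) := by
  have hK0 : 0 < K := zero_lt_one.trans_le hK
  have scaled := (monotone_mul_left_of_nonneg (inv_nonneg.2 hK0.le)).comp_monotoneOn
    (monotoneOn_div_add_mul_div_sq hr0 hr1 (abs_one_sub_rpow_div_le hr0 hr1.le hK))
  refine scaled.congr fun x _ ↦ ?_
  simp only [Function.comp_apply]
  field_simp

/-- The function `F` whose values `F(cos(2πk/K))` are the diagonal nDFT correlations of
the Wiener phase-noise process is monotone increasing on `(-∞, 2r/(1+r²)]`. -/
theorem stmt_12 (K : ℕ) (hK : 1 ≤ K) (r : ℝ) (hr0 : 0 < r) (hr1 : r < 1)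
    (F : ℝ → ℝ)
    (hF : ∀ x : ℝ, F x =
      (1 - r ^ 2) / ((K : ℝ) * (1 + r ^ 2 - 2 * r * x)) +
        2 * r * (1 - r ^ K) * (2 * r - (1 + r ^ 2) * x) /
          ((K : ℝ) ^ 2 * (1 + r ^ 2 - 2 * r * x) ^ 2)) :
    ∀ x y : ℝ, x ≤ y → y ≤ 2 * r / (1 + r ^ 2) → F x ≤ F y := by
  intro x y hxy hy
  simpa only [hF, Real.rpow_natCast] using
    stmt_12_general (Nat.one_le_cast.2 hK) hr0.le hr1 (hxy.trans hy) hy hxy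
end

section
/- Let K ≥ 1 be an integer and 0 < r < 1. For all integers k, k' satisfying (K/(2π))·arccos(2r/(1+r²)) ≤ |k| ≤ |k'| ≤ K/2, the double sums Δ(k) and Δ(k') are real numbers and Δ(k') ≤ Δ(k); that is, Δ(k) is a decreasing function of |k| on this range. -/
open Complex Finset

/-!
Pairing the entries below and above the diagonal turns the double sum into geometric sums of
`ρ = r e^{2πik/K}` and of its conjugate. Since `ρ ^ K = r ^ K` does not depend on `k`, the result
depends on `k` only through the Poisson kernel `P = (1 - r²) / |1 - ρ|²`:
`K² Δ(k) = K P + (1 - r^K) P (s - P)`, where `s = (1 + r²) / (1 - r²)`.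
By Bernoulli's inequality `(1 - r^K) s ≤ K`, so this quadratic is increasing in `P` up to `P = s`.
Finally `P` increases with `cos (2πk/K)`, and `P ≤ s` means exactly
`cos (2πk/K) ≤ 2r / (1 + r²)`.
-/

open scoped ComplexConjugate

section ToeplitzSum

lemma sum_range_sum_range_eq_sum_diag_add {M : Type*} [AddCommMonoid M] (f : ℕ → ℕ → M) (N : ℕ) :
    ∑ m ∈ range N, ∑ n ∈ range N, f m n =
      ∑ m ∈ range N, (f m m + ∑ n ∈ range m, (f m n + f n m)) := by
  induction N with
  | zero => simp
  | succ N ih =>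
    rw [sum_range_succ, sum_range_succ (fun m ↦ f m m + _), ← ih]
    simp only [sum_range_succ _ N, sum_add_distrib]
    abel

variable {F : Type*} [Field F] {a b : F}

lemma sum_range_pow_sub (ha : a ≠ 1) (N : ℕ) :
    ∑ n ∈ range N, a ^ (N - n) = a / (1 - a) * (1 - a ^ N) := by
  have shift : ∀ n ∈ range N, a ^ (N - n) = a * a ^ (N - 1 - n) := fun n hn ↦ by
    rw [← pow_succ']
    congr 1
    have := mem_range.1 hn
    omega
  rw [sum_congr rfl shift, ← mul_sum, sum_range_reflect (a ^ ·), geom_sum_eq ha, ← neg_div_neg_eq]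
  ring

lemma sum_range_sum_range_pow_sub (ha : a ≠ 1) (N : ℕ) :
    ∑ m ∈ range N, ∑ n ∈ range m, a ^ (m - n) =
      a / (1 - a) * (N - (1 - a ^ N) / (1 - a)) := by
  simp only [sum_range_pow_sub ha, ← mul_sum, sum_sub_distrib, sum_const, card_range,
    nsmul_eq_mul, mul_one, geom_sum_eq ha]
  rw [← neg_div_neg_eq (a ^ N - 1), neg_sub, neg_sub]

/- Subtraction of exponents is truncated: the entry is `a ^ (m - n)` below the diagonal and
`b ^ (n - m)` above it. -/
lemma sum_toeplitz_pow (ha : a ≠ 1) (hb : b ≠ 1) (N : ℕ) :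
    ∑ m ∈ range N, ∑ n ∈ range N, a ^ (m - n) * b ^ (n - m) =
      N + a / (1 - a) * (N - (1 - a ^ N) / (1 - a)) +
        b / (1 - b) * (N - (1 - b ^ N) / (1 - b)) := by
  have off_diagonal : ∀ m, ∀ n ∈ range m,
      a ^ (m - n) * b ^ (n - m) + a ^ (n - m) * b ^ (m - n) = a ^ (m - n) + b ^ (m - n) :=
    fun m n hn ↦ by simp [Nat.sub_eq_zero_of_le (mem_range.1 hn).le]
  rw [sum_range_sum_range_eq_sum_diag_add]
  simp only [sum_congr rfl (off_diagonal _), sum_add_distrib, sum_range_sum_range_pow_sub ha,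
    sum_range_sum_range_pow_sub hb, Nat.sub_self, pow_zero, mul_one, sum_const, card_range,
    nsmul_eq_mul]
  ring

lemma sum_toeplitz_pow_of_pow_eq {q : F} {N : ℕ} (ha : a ≠ 1) (hb : b ≠ 1)
    (haN : a ^ N = q) (hbN : b ^ N = q) :
    ∑ m ∈ range N, ∑ n ∈ range N, a ^ (m - n) * b ^ (n - m) =
      N * ((1 - a * b) / ((1 - a) * (1 - b))) +
        (1 - q) * ((1 + a * b) / ((1 - a) * (1 - b)) -
          ((1 - a * b) / ((1 - a) * (1 - b))) ^ 2) := by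
  have ha' : 1 - a ≠ 0 := sub_ne_zero.2 ha.symm
  have hb' : 1 - b ≠ 0 := sub_ne_zero.2 hb.symm
  rw [sum_toeplitz_pow ha hb, haN, hbN]
  field_simp
  ring

end ToeplitzSum

section PoissonKernel

lemma poissonKernel_zero_one (ρ : ℂ) :
    poissonKernel 0 ρ 1 = (1 - ‖ρ‖ ^ 2) / ‖1 - ρ‖ ^ 2 := by
  simp [poissonKernel_def]

lemma sum_toeplitz_conj_pow_eq_poissonKernel {ρ : ℂ} (hρ : ‖ρ‖ < 1) {q : ℝ} {N : ℕ}
    (hq : ρ ^ N = q) :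
    ∑ m ∈ range N, ∑ n ∈ range N, conj ρ ^ (m - n) * ρ ^ (n - m) =
      ((N * poissonKernel 0 ρ 1 + (1 - q) * (poissonKernel 0 ρ 1 *
        ((1 + ‖ρ‖ ^ 2) / (1 - ‖ρ‖ ^ 2) - poissonKernel 0 ρ 1)) : ℝ) : ℂ) := by
  have hρ1 : ρ ≠ 1 := by
    rintro rfl
    simp at hρ
  have hconj1 : conj ρ ≠ 1 := by
    simpa only [ne_eq, map_eq_one_iff _ (starRingEnd ℂ).injective] using hρ1
  have hconjN : conj ρ ^ N = q := by rw [← map_pow, hq, conj_ofReal]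
  have hnum : (1 : ℂ) - (‖ρ‖ : ℂ) ^ 2 ≠ 0 := by
    exact_mod_cast (by nlinarith [norm_nonneg ρ] : (1 : ℝ) - ‖ρ‖ ^ 2 ≠ 0)
  have hden : (1 - conj ρ) * (1 - ρ) = (‖1 - ρ‖ : ℂ) ^ 2 := by
    rw [← conj_mul', map_sub, map_one]
  have hden0 : (‖1 - ρ‖ : ℂ) ≠ 0 := by simpa [sub_eq_zero] using hρ1.symm
  rw [sum_toeplitz_pow_of_pow_eq hconj1 hρ1 hconjN hq, hden, conj_mul', poissonKernel_zero_one]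
  push_cast
  field_simp

lemma norm_mul_exp_ofReal_mul_I (r φ : ℝ) : ‖(r : ℂ) * exp (φ * I)‖ = |r| := by
  rw [norm_mul, norm_exp_ofReal_mul_I, mul_one, norm_real, Real.norm_eq_abs]

lemma norm_one_sub_mul_exp_sq (r φ : ℝ) :
    ‖1 - r * exp (φ * I)‖ ^ 2 = 1 - 2 * r * Real.cos φ + r ^ 2 := by
  rw [← normSq_eq_norm_sq, normSq_sub]
  simp [normSq_eq_norm_sq, exp_ofReal_mul_I_re, exp_ofReal_mul_I_im]
  ring

lemma poissonKernel_zero_mul_exp_one (r φ : ℝ) :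
    poissonKernel 0 (r * exp (φ * I)) 1 = (1 - r ^ 2) / (1 - 2 * r * Real.cos φ + r ^ 2) := by
  rw [poissonKernel_zero_one, norm_one_sub_mul_exp_sq, norm_mul_exp_ofReal_mul_I, sq_abs]

lemma one_sub_two_mul_cos_add_sq_pos {r : ℝ} (hr : |r| < 1) (φ : ℝ) :
    0 < 1 - 2 * r * Real.cos φ + r ^ 2 := by
  have hsq : r ^ 2 < 1 := (sq_lt_one_iff_abs_lt_one r).2 hr
  nlinarith [sq_nonneg (r - Real.cos φ), Real.cos_sq_le_one φ, abs_le.1 hr.le]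

lemma poissonKernel_le_poissonKernel_of_cos_le {r φ ψ : ℝ} (hr0 : 0 ≤ r) (hr1 : r < 1)
    (h : Real.cos ψ ≤ Real.cos φ) :
    poissonKernel 0 (r * exp (ψ * I)) 1 ≤ poissonKernel 0 (r * exp (φ * I)) 1 := by
  simp only [poissonKernel_zero_mul_exp_one]
  have hpos := one_sub_two_mul_cos_add_sq_pos (abs_lt.2 ⟨by linarith, hr1⟩) φ
  have hnum : 0 ≤ 1 - r ^ 2 := by nlinarith
  gcongr

lemma poissonKernel_le_iff_cos_le {r : ℝ} (hr0 : 0 < r) (hr1 : r < 1) (φ : ℝ) :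
    poissonKernel 0 (r * exp (φ * I)) 1 ≤ (1 + r ^ 2) / (1 - r ^ 2) ↔
      Real.cos φ ≤ 2 * r / (1 + r ^ 2) := by
  have hpos := one_sub_two_mul_cos_add_sq_pos (abs_lt.2 ⟨by linarith, hr1⟩) φ
  have hnum : 0 < 1 - r ^ 2 := by nlinarith
  have hdiff : (1 + r ^ 2) * (1 - 2 * r * Real.cos φ + r ^ 2) - (1 - r ^ 2) * (1 - r ^ 2) =
      2 * r * (2 * r - Real.cos φ * (1 + r ^ 2)) := by ring
  rw [poissonKernel_zero_mul_exp_one, div_le_div_iff₀ hpos hnum, le_div_iff₀ (by positivity),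
    ← sub_nonneg, hdiff, mul_nonneg_iff_of_pos_left (by positivity), sub_nonneg]

end PoissonKernel

section Monotonicity

lemma one_sub_pow_mul_le {r : ℝ} (hr0 : 0 ≤ r) (hr1 : r < 1) (N : ℕ) :
    (1 - r ^ N) * ((1 + r ^ 2) / (1 - r ^ 2)) ≤ N := by
  have bernoulli : 1 - r ^ N ≤ N * (1 - r) := by
    linarith [one_add_mul_sub_le_pow (show -1 ≤ r by linarith) N]
  rw [← mul_div_assoc, div_le_iff₀ (by nlinarith)]
  calc (1 - r ^ N) * (1 + r ^ 2)
      ≤ N * (1 - r) * (1 + r) := by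
        have : 0 ≤ 1 - r := by linarith
        gcongr
        nlinarith
    _ = N * (1 - r ^ 2) := by ring

lemma monotoneOn_mul_add_mul_mul_sub {A c s : ℝ} (hc : 0 ≤ c) (hcs : c * s ≤ A) :
    MonotoneOn (fun x ↦ A * x + c * (x * (s - x))) (Set.Iic s) := by
  intro x hx y hy hxy
  have hsum : c * (x + y) ≤ c * (s + s) := by gcongr <;> assumption
  have hslope : 0 ≤ A + c * (s - (x + y)) := by linarith
  linarith [mul_nonneg (sub_nonneg.2 hxy) hslope]

end Monotonicity

section Correlation

lemma pow_natAbs_sub_mul_exp (r φ : ℝ) (m n : ℕ) :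
    (r : ℂ) ^ ((m : ℤ) - n).natAbs * exp (-((m - n) * φ * I)) =
      conj (r * exp (φ * I)) ^ (m - n) * (r * exp (φ * I)) ^ (n - m) := by
  rw [map_mul, conj_ofReal, ← exp_conj, map_mul, conj_ofReal, conj_I]
  rcases le_total n m with h | h
  · rw [show ((m : ℤ) - n).natAbs = m - n by omega, Nat.sub_eq_zero_of_le h, pow_zero, mul_one,
      mul_pow, ← exp_nat_mul, Nat.cast_sub h]
    ring_nf
  · rw [show ((m : ℤ) - n).natAbs = n - m by omega, Nat.sub_eq_zero_of_le h, pow_zero, one_mul,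
      mul_pow, ← exp_nat_mul, Nat.cast_sub h]
    ring_nf

lemma mul_exp_two_pi_mul_div_pow {K : ℕ} (hK : K ≠ 0) (r : ℝ) (k : ℤ) :
    ((r : ℂ) * exp ((2 * Real.pi * k / K : ℝ) * I)) ^ K = (r ^ K : ℝ) := by
  have hangle : (K : ℂ) * ((2 * Real.pi * k / K : ℝ) * I) = k * (2 * Real.pi * I) := by
    push_cast
    field_simp
  rw [mul_pow, ← exp_nat_mul, hangle, exp_int_mul_two_pi_mul_I, mul_one, ofReal_pow]

/-- The Poisson kernel of the unit disk at the point `ρ_k = r e^{2πik/K}`, relative to the boundary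
point `1`. -/
noncomputable def dftPoissonKernel (K : ℕ) (r : ℝ) (k : ℤ) : ℝ :=
  poissonKernel 0 (r * exp ((2 * Real.pi * k / K : ℝ) * I)) 1

lemma sum_diagonal_correlation {K : ℕ} (hK : K ≠ 0) {r : ℝ} (hr : |r| < 1) (k : ℤ) :
    ∑ m ∈ range K, ∑ n ∈ range K, (r : ℂ) ^ ((m : ℤ) - n).natAbs *
        exp (-2 * Real.pi * I * (k * m - k * n : ℤ) / K) =
      ((K * dftPoissonKernel K r k + (1 - r ^ K) * (dftPoissonKernel K r k *
        ((1 + r ^ 2) / (1 - r ^ 2) - dftPoissonKernel K r k)) : ℝ) : ℂ) := by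
  have hphase : ∀ m n : ℕ, -2 * Real.pi * I * (k * m - k * n : ℤ) / K =
      -(((m : ℂ) - n) * (2 * Real.pi * k / K : ℝ) * I) := fun m n ↦ by
    push_cast
    ring
  simp only [hphase, pow_natAbs_sub_mul_exp]
  rw [sum_toeplitz_conj_pow_eq_poissonKernel ((norm_mul_exp_ofReal_mul_I r _).trans_lt hr)
    (mul_exp_two_pi_mul_div_pow hK r k), norm_mul_exp_ofReal_mul_I, sq_abs, dftPoissonKernel]

end Correlation

section Cosine

lemma cos_le_cos_of_abs_le_abs {φ ψ : ℝ} (h : |φ| ≤ |ψ|) (hψ : |ψ| ≤ Real.pi) :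
    Real.cos ψ ≤ Real.cos φ := by
  rw [← Real.cos_abs φ, ← Real.cos_abs ψ]
  exact Real.cos_le_cos_of_nonneg_of_le_pi (abs_nonneg φ) hψ h

lemma cos_le_of_arccos_le_abs {x φ : ℝ} (hx : -1 ≤ x) (h : Real.arccos x ≤ |φ|)
    (hφ : |φ| ≤ Real.pi) : Real.cos φ ≤ x := by
  rcases le_total x 1 with hx1 | hx1
  · rw [← Real.cos_arccos hx hx1]
    exact cos_le_cos_of_abs_le_abs (by rwa [abs_of_nonneg (Real.arccos_nonneg x)]) hφ
  · exact (Real.cos_le_one φ).trans hx1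

variable {T : ℝ}

lemma abs_two_pi_mul_div (hT : 0 < T) (t : ℝ) :
    |2 * Real.pi * t / T| = 2 * Real.pi * |t| / T := by
  rw [abs_div, abs_mul, abs_of_pos Real.two_pi_pos, abs_of_pos hT]

lemma abs_two_pi_mul_div_le_pi_iff (hT : 0 < T) {t : ℝ} :
    |2 * Real.pi * t / T| ≤ Real.pi ↔ |t| ≤ T / 2 := by
  rw [abs_two_pi_mul_div hT, div_le_iff₀ hT, mul_comm 2, mul_assoc,
    mul_le_mul_iff_right₀ Real.pi_pos, le_div_iff₀' two_pos]

lemma cos_two_pi_mul_div_le_cos (hT : 0 < T) {t t' : ℝ} (h : |t| ≤ |t'|) (ht' : |t'| ≤ T / 2) :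
    Real.cos (2 * Real.pi * t' / T) ≤ Real.cos (2 * Real.pi * t / T) := by
  refine cos_le_cos_of_abs_le_abs ?_ ((abs_two_pi_mul_div_le_pi_iff hT).2 ht')
  rw [abs_two_pi_mul_div hT, abs_two_pi_mul_div hT]
  gcongr

lemma cos_two_pi_mul_div_le_of_arccos_le (hT : 0 < T) {x t : ℝ} (hx : -1 ≤ x)
    (h : T / (2 * Real.pi) * Real.arccos x ≤ |t|) (ht : |t| ≤ T / 2) :
    Real.cos (2 * Real.pi * t / T) ≤ x := by
  refine cos_le_of_arccos_le_abs hx ?_ ((abs_two_pi_mul_div_le_pi_iff hT).2 ht)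
  rwa [abs_two_pi_mul_div hT, le_div_iff₀' hT, ← div_le_iff₀' Real.two_pi_pos,
    mul_div_right_comm]

end Cosine

/-- On the range `(K/2π)·arccos(2r/(1+r²)) ≤ |k| ≤ |k'| ≤ K/2`, the diagonal nDFT
correlations `Δ(k)` of the Wiener phase-noise process are real and decreasing in `|k|`. -/
theorem stmt_14 (K : ℕ) (hK : 1 ≤ K) (r : ℝ) (hr0 : 0 < r) (hr1 : r < 1)
    (Δ : ℤ → ℤ → ℂ)
    (hΔ : ∀ k1 k2 : ℤ, Δ k1 k2 =
      (1 / (K : ℂ) ^ 2) * ∑ m ∈ Finset.range K, ∑ n ∈ Finset.range K,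
        (r : ℂ) ^ (((m : ℤ) - (n : ℤ)).natAbs) *
          Complex.exp (-2 * (Real.pi : ℂ) * Complex.I *
            (((k1 * m - k2 * n : ℤ)) : ℂ) / (K : ℂ)))
    (k k' : ℤ)
    (h1 : ((K : ℝ) / (2 * Real.pi)) * Real.arccos (2 * r / (1 + r ^ 2)) ≤ ((|k| : ℤ) : ℝ))
    (h2 : ((|k| : ℤ) : ℝ) ≤ ((|k'| : ℤ) : ℝ))
    (h3 : ((|k'| : ℤ) : ℝ) ≤ (K : ℝ) / 2) :
    (Δ k k).im = 0 ∧ (Δ k' k').im = 0 ∧ (Δ k' k').re ≤ (Δ k k).re := by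
  have hKpos : (0 : ℝ) < K := by exact_mod_cast hK
  simp only [Int.cast_abs] at h1 h2 h3
  have hclosed (j : ℤ) : Δ j j = ((1 / K ^ 2 * (K * dftPoissonKernel K r j +
      (1 - r ^ K) * (dftPoissonKernel K r j *
        ((1 + r ^ 2) / (1 - r ^ 2) - dftPoissonKernel K r j))) : ℝ) : ℂ) := by
    rw [hΔ, sum_diagonal_correlation (by omega) (abs_lt.2 ⟨by linarith, hr1⟩) j]
    push_cast
    rfl
  have hthreshold : Real.cos (2 * Real.pi * k / K) ≤ 2 * r / (1 + r ^ 2) :=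
    cos_two_pi_mul_div_le_of_arccos_le hKpos (neg_one_lt_zero.le.trans (by positivity)) h1
      (h2.trans h3)
  have hle : dftPoissonKernel K r k' ≤ dftPoissonKernel K r k :=
    poissonKernel_le_poissonKernel_of_cos_le hr0.le hr1 (cos_two_pi_mul_div_le_cos hKpos h2 h3)
  have hles : dftPoissonKernel K r k ≤ (1 + r ^ 2) / (1 - r ^ 2) :=
    (poissonKernel_le_iff_cos_le hr0 hr1 _).2 hthreshold
  have hpow : 0 ≤ 1 - r ^ K := sub_nonneg.2 (pow_le_one₀ hr0.le hr1.le)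
  rw [hclosed, hclosed]
  refine ⟨ofReal_im _, ofReal_im _, mul_le_mul_of_nonneg_left ?_ (by positivity)⟩
  exact monotoneOn_mul_add_mul_mul_sub hpow (one_sub_pow_mul_le hr0.le hr1 K)
    (hle.trans hles) hles hle
end

section
/- Let E_s > 0, A0 > 0, A1 ≥ 0, A2 ≥ 0 be real numbers with A1 + A2·E_s > 0, and define f : ℝ → ℝ by f(x) = x·(E_s − x) / (A0 + A1·x + A2·x²). Set x* = (−A0 + √(A0² + A0·E_s·(A1 + A2·E_s))) / (A1 + A2·E_s). Then 0 < x* < E_s, x* satisfies (A1 + A2·E_s)·x*² + 2·A0·x* − A0·E_s = 0, and f has derivative 0 at x* (i.e., HasDerivAt f 0 x*). -/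
/-!
Write `Ξ(x) = A0 + A1·x + A2·x²`. The cubic terms in the numerator of `f'` cancel, leaving
`-((A1 + A2·E_s)x² + 2A0·x − A0·E_s)`. A quarter of the discriminant of this quadratic is
`A0·Ξ(E_s)`, and rationalising its root gives `x* = A0·E_s / (A0 + √(A0·Ξ(E_s)))`, from which
`0 < x* < E_s` is visible.
-/

section QuadraticRoot

variable {K : Type*} [Field K] {a b c s : K}

lemma quadratic_neg_add_div_eq_zero (ha : a ≠ 0) (hs : s ^ 2 = b ^ 2 + a * c) :
    a * ((-b + s) / a) ^ 2 + 2 * b * ((-b + s) / a) - c = 0 := by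
  field_simp
  linear_combination hs

lemma neg_add_div_eq_div_add (ha : a ≠ 0) (hbs : b + s ≠ 0) (hs : s ^ 2 = b ^ 2 + a * c) :
    (-b + s) / a = c / (b + s) := by
  rw [div_eq_div_iff ha hbs]
  linear_combination hs

end QuadraticRoot

lemma mul_div_add_mem_Ioo {K : Type*} [Field K] [LinearOrder K] [IsStrictOrderedRing K]
    {a s E : K} (ha : 0 < a) (hs : 0 < s) (hE : 0 < E) : a * E / (a + s) ∈ Set.Ioo 0 E := by
  refine ⟨by positivity, ?_⟩
  rw [div_lt_iff₀ (add_pos ha hs), mul_comm a E]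
  exact mul_lt_mul_of_pos_left (lt_add_of_pos_right a hs) hE

lemma hasDerivAt_mul_sub_div_quadratic {𝕜 : Type*} [NontriviallyNormedField 𝕜]
    {E A0 A1 A2 x : 𝕜} (hx : A0 + A1 * x + A2 * x ^ 2 ≠ 0) :
    HasDerivAt (fun y ↦ y * (E - y) / (A0 + A1 * y + A2 * y ^ 2))
      (-((A1 + A2 * E) * x ^ 2 + 2 * A0 * x - A0 * E) / (A0 + A1 * x + A2 * x ^ 2) ^ 2) x := by
  have hnum : HasDerivAt (fun y ↦ y * (E - y)) (1 * (E - x) + x * -1) x :=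
    (hasDerivAt_id' x).mul ((hasDerivAt_id' x).const_sub E)
  have hdenom : HasDerivAt (fun y ↦ A0 + A1 * y + A2 * y ^ 2) (A1 * 1 + A2 * (2 * x)) x := by
    simpa using (((hasDerivAt_id' x).const_mul A1).const_add A0).fun_add
      ((hasDerivAt_pow 2 x).const_mul A2)
  refine (hnum.fun_div hdenom hx).congr_deriv ?_
  congr 1
  ring

theorem stmt_15_general (Es A0 A1 A2 : ℝ) (hEs : 0 < Es)
    (hΞ : ∀ x ∈ Set.Icc 0 Es, 0 < A0 + A1 * x + A2 * x ^ 2) (hden : A1 + A2 * Es ≠ 0)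
    (f : ℝ → ℝ)
    (hf : ∀ x : ℝ, f x = x * (Es - x) / (A0 + A1 * x + A2 * x ^ 2))
    (xs : ℝ)
    (hxs : xs = (-A0 + Real.sqrt (A0 ^ 2 + A0 * Es * (A1 + A2 * Es))) / (A1 + A2 * Es)) :
    0 < xs ∧ xs < Es ∧
    (A1 + A2 * Es) * xs ^ 2 + 2 * A0 * xs - A0 * Es = 0 ∧
    HasDerivAt f 0 xs := by
  have hA0 : 0 < A0 := by simpa using hΞ 0 (Set.left_mem_Icc.2 hEs.le)
  have hdisc : 0 < A0 ^ 2 + A0 * Es * (A1 + A2 * Es) := by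
    linear_combination mul_pos hA0 (hΞ Es (Set.right_mem_Icc.2 hEs.le))
  set s := Real.sqrt (A0 ^ 2 + A0 * Es * (A1 + A2 * Es))
  have hs_pos : 0 < s := Real.sqrt_pos.2 hdisc
  have hs_sq : s ^ 2 = A0 ^ 2 + (A1 + A2 * Es) * (A0 * Es) := by
    rw [Real.sq_sqrt hdisc.le, mul_comm (A0 * Es)]
  have hmem : xs ∈ Set.Ioo 0 Es := by
    rw [hxs, neg_add_div_eq_div_add hden (add_pos hA0 hs_pos).ne' hs_sq]
    exact mul_div_add_mem_Ioo hA0 hs_pos hEs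
  have hquad : (A1 + A2 * Es) * xs ^ 2 + 2 * A0 * xs - A0 * Es = 0 :=
    hxs ▸ quadratic_neg_add_div_eq_zero hden hs_sq
  refine ⟨hmem.1, hmem.2, hquad, ?_⟩
  have hΞ_xs := hΞ xs (Set.Ioo_subset_Icc_self hmem)
  rw [funext hf]
  refine (hasDerivAt_mul_sub_div_quadratic hΞ_xs.ne').congr_deriv ?_
  rw [hquad, neg_zero, zero_div]

/-- The claimed reference-signal power allocation `x* = E_r^statn` lies strictly between
`0` and `E_s`, solves `(A1+A2·E_s)x² + 2A0·x − A0·E_s = 0`, and is a stationary point of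
`f(x) = x(E_s − x)/(A0 + A1x + A2x²)`. -/
theorem stmt_15 (Es A0 A1 A2 : ℝ) (hEs : 0 < Es) (hA0 : 0 < A0)
    (hA1 : 0 ≤ A1) (hA2 : 0 ≤ A2) (hden : 0 < A1 + A2 * Es)
    (f : ℝ → ℝ)
    (hf : ∀ x : ℝ, f x = x * (Es - x) / (A0 + A1 * x + A2 * x ^ 2))
    (xs : ℝ)
    (hxs : xs = (-A0 + Real.sqrt (A0 ^ 2 + A0 * Es * (A1 + A2 * Es))) / (A1 + A2 * Es)) :
    0 < xs ∧ xs < Es ∧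
    (A1 + A2 * Es) * xs ^ 2 + 2 * A0 * xs - A0 * Es = 0 ∧
    HasDerivAt f 0 xs :=
  stmt_15_general Es A0 A1 A2 hEs (fun x hx ↦ by have := hx.1; positivity) hden.ne'
    f hf xs hxs
end
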